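/- Let X be a compact Hausdorff space. Then every state on the commutative C*-algebra C(X, ℂ) is CP-approximable. -/

import Mathlib

open scoped ComplexOrder

/-- A map `T` between star rings is *completely positive* if for every `k`, the induced
entrywise map on `k × k` matrices sends positive elements (those of the form `Nᴴ * N`)
to positive elements. -/
def IsCPMap {A B : Type*} [NonUnitalSemiring A] [StarRing A]
    [NonUnitalSemiring B] [StarRing B] (T : A → B) : Prop :=
  ∀ (k : ℕ) (M : Matrix (Fin k) (Fin k) A),
    (∃ N : Matrix (Fin k) (Fin k) A, M = star N * N) →
      ∃ N' : Matrix (Fin k) (Fin k) B, M.map T = star N' * N'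

/-- A *state* on a unital complex star algebra: a unital positive linear functional. -/
structure IsState {A : Type*} [Ring A] [StarRing A] [Module ℂ A] (φ : A →ₗ[ℂ] ℂ) : Prop where
  unital : φ 1 = 1
  pos : ∀ a : A, 0 ≤ φ (star a * a)

/-- A state `φ` is *CP-approximable* if for every finite set `F` and `ε > 0` there is a
finite-rank, unital, completely positive, `φ`-preserving map `T` with `‖T a - a‖ ≤ ε` on `F`. -/
def IsCPApproximable {A : Type*} [NormedRing A] [StarRing A] [Module ℂ A]
    (φ : A →ₗ[ℂ] ℂ) : Prop :=
  ∀ (F : Finset A) (ε : ℝ), 0 < ε →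
    ∃ T : A →ₗ[ℂ] A, FiniteDimensional ℂ (LinearMap.range T) ∧
      T 1 = 1 ∧ IsCPMap (⇑T) ∧ (∀ a, φ (T a) = φ a) ∧ ∀ a ∈ F, ‖T a - a‖ ≤ ε

/-!
Take a finite partition of unity `f i` on `X` such that the given functions are almost constant on
the support of each `f i`, and average each `a` against `φ`: put `T a = ∑ i, ψ i a • f i` with
`ψ i a = φ (f i * a) / φ (f i)`. Each `ψ i` is a state, so `T` is unital and completely positive,
and `φ (T a) = ∑ i, φ (f i * a) = φ a`. Moreover `ψ i a` is close to the values of `a` on the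
support of `f i`, so `T a` is close to `a`. If `φ (f i) = 0`, then `φ (f i * a) = 0` for all `a` by
the Cauchy-Schwarz inequality, and `ψ i` can be replaced by evaluation at a point.
-/

section CompletelyPositive

theorem IsCPMap.comp {A B C : Type*} [NonUnitalSemiring A] [StarRing A] [NonUnitalSemiring B]
    [StarRing B] [NonUnitalSemiring C] [StarRing C] {S : B → C} {T : A → B}
    (hS : IsCPMap S) (hT : IsCPMap T) : IsCPMap (S ∘ T) := fun k M hM => by
  simpa only [Matrix.map_map] using hS k _ (hT k M hM)

theorem isCPMap_smul_star_mul_self (R : Type*) {A : Type*} [CommSemiring R] [StarRing R]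
    [NonUnitalSemiring A] [StarRing A] [Module R A] [StarModule R A] [IsScalarTower R A A]
    [SMulCommClass R A A] (b : A) : IsCPMap fun r : R => r • (star b * b) := by
  rintro k _ ⟨N, rfl⟩
  refine ⟨N.map (· • b), ?_⟩
  ext i j
  simp only [Matrix.map_apply, Matrix.mul_apply, Matrix.star_apply, star_smul,
    smul_mul_smul_comm, Finset.sum_smul]

theorem exists_sum_star_mul_self {ι A : Type*} [Fintype ι] [NonUnitalCStarAlgebra A]
    (a : ι → A) : ∃ b : A, ∑ i, star (a i) * a i = star b * b := by
  let _ := CStarAlgebra.spectralOrder A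
  have := CStarAlgebra.spectralOrderedRing A
  exact CStarAlgebra.nonneg_iff_eq_star_mul_self.mp
    (Finset.sum_nonneg fun i _ => star_mul_self_nonneg (a i))

theorem IsCPMap.sum {ι A B : Type*} [Fintype ι] [NonUnitalSemiring A] [StarRing A]
    [NonUnitalCStarAlgebra B] {T : ι → A → B} (hT : ∀ i, IsCPMap (T i)) :
    IsCPMap fun a => ∑ i, T i a := by
  let _ := CStarAlgebra.spectralOrder B
  have := CStarAlgebra.spectralOrderedRing B
  intro k M hM
  choose N hN using fun i => hT i k M hM
  -- `CStarMatrix` carries the C*-algebra structure that `Matrix` lacks.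
  obtain ⟨N', hN'⟩ := exists_sum_star_mul_self fun i => CStarMatrix.ofMatrix (N i)
  refine ⟨CStarMatrix.ofMatrix.symm N', Eq.trans ?_ hN'⟩
  calc M.map (fun a => ∑ i, T i a) = ∑ i, M.map (T i) := by
        ext p q
        simp only [Matrix.map_apply, Matrix.sum_apply]
    _ = ∑ i, star (N i) * N i := Finset.sum_congr rfl fun i _ => hN i

end CompletelyPositive

section PositiveFunctional

variable {A : Type*} [NonUnitalCStarAlgebra A] [PartialOrder A] [StarOrderedRing A]
  (φ : A →ₚ[ℂ] ℂ)

theorem posSemidef_map_star_mul_self {n : Type*} [Fintype n] (N : Matrix n n A) :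
    ((star N * N).map φ).PosSemidef := by
  -- The `c`-th summand is the Gram matrix of the `c`-th row of `N` in the GNS space of `φ`.
  have hgram : (star N * N).map φ = ∑ c, Matrix.gram ℂ fun i => φ.toPreGNS (N c i) := by
    ext i j
    simp only [Matrix.map_apply, Matrix.mul_apply, Matrix.star_apply, map_sum, Matrix.sum_apply,
      Matrix.gram_apply, φ.preGNS_inner_def, φ.ofPreGNS_toPreGNS]
  rw [hgram]
  exact Matrix.posSemidef_sum _ fun c _ => Matrix.posSemidef_gram ℂ _

open scoped MatrixOrder Matrix.Norms.L2Operator in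
theorem isCPMap_positiveLinearMap : IsCPMap φ := by
  rintro k _ ⟨N, rfl⟩
  exact CStarAlgebra.nonneg_iff_eq_star_mul_self.mp (posSemidef_map_star_mul_self φ N).nonneg

open scoped InnerProductSpace in
theorem norm_map_mul_sq_le {f : A} (hf : 0 ≤ f) (b : A) :
    ‖φ (f * b)‖ ^ 2 ≤ ‖φ f‖ * ‖φ (star b * f * b)‖ := by
  obtain ⟨g, rfl⟩ := CStarAlgebra.nonneg_iff_eq_star_mul_self.mp hf
  have cauchy_schwarz := norm_inner_le_norm (𝕜 := ℂ) (φ.toPreGNS g) (φ.toPreGNS (g * b))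
  have norm_sq (c : A) : ‖φ.toPreGNS c‖ ^ 2 = ‖φ (star c * c)‖ := by
    rw [← φ.ofPreGNS_toPreGNS c, ← φ.preGNS_norm_sq]
    simp
  calc ‖φ (star g * g * b)‖ ^ 2 = ‖⟪φ.toPreGNS g, φ.toPreGNS (g * b)⟫_ℂ‖ ^ 2 := by
        rw [φ.preGNS_inner_def, φ.ofPreGNS_toPreGNS, φ.ofPreGNS_toPreGNS, mul_assoc]
    _ ≤ (‖φ.toPreGNS g‖ * ‖φ.toPreGNS (g * b)‖) ^ 2 := by gcongr
    _ = ‖φ (star g * g)‖ * ‖φ (star b * (star g * g) * b)‖ := by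
        rw [mul_pow, norm_sq, norm_sq, star_mul]
        simp only [mul_assoc]

theorem norm_map_mul_le {f b : A} {r : ℝ} (hf : 0 ≤ f) (hr : 0 ≤ r)
    (hb : star b * f * b ≤ ((r ^ 2 : ℝ) : ℂ) • f) : ‖φ (f * b)‖ ≤ r * ‖φ f‖ := by
  have hφb : ‖φ (star b * f * b)‖ ≤ r ^ 2 * ‖φ f‖ := by
    have hle := CStarAlgebra.norm_le_norm_of_nonneg_of_le
      (φ.map_nonneg (star_left_conjugate_nonneg hf b)) (OrderHomClass.mono φ hb)
    rwa [map_smul, norm_smul, Complex.norm_of_nonneg (sq_nonneg r)] at hle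
  refine le_of_sq_le_sq ?_ (by positivity)
  calc ‖φ (f * b)‖ ^ 2 ≤ ‖φ f‖ * ‖φ (star b * f * b)‖ := norm_map_mul_sq_le φ hf b
    _ ≤ ‖φ f‖ * (r ^ 2 * ‖φ f‖) := by gcongr
    _ = (r * ‖φ f‖) ^ 2 := by ring

end PositiveFunctional

section State

/-- A state, bundled as a positive linear functional. -/
noncomputable def IsState.toPositiveLinearMap {A : Type*} [CStarAlgebra A] [PartialOrder A]
    [StarOrderedRing A] {φ : A →ₗ[ℂ] ℂ} (hφ : IsState φ) : A →ₚ[ℂ] ℂ :=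
  .mk₀ φ fun a ha => by
    obtain ⟨b, rfl⟩ := CStarAlgebra.nonneg_iff_eq_star_mul_self.mp ha
    exact hφ.pos b

theorem IsState.isCPMap {A : Type*} [CStarAlgebra A] {φ : A →ₗ[ℂ] ℂ} (hφ : IsState φ) :
    IsCPMap φ := by
  let _ := CStarAlgebra.spectralOrder A
  have := CStarAlgebra.spectralOrderedRing A
  exact isCPMap_positiveLinearMap hφ.toPositiveLinearMap

/-- The functional `a ↦ φ (f * a) / φ f`, which is the state `φ` conditioned on the weight `f`.
When `φ f = 0` it is a given functional `ρ` instead. -/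
noncomputable def conditionedFunctional {A : Type*} [Ring A] [Algebra ℂ A] (φ ρ : A →ₗ[ℂ] ℂ)
    (f : A) : A →ₗ[ℂ] ℂ :=
  open Classical in if φ f = 0 then ρ else (φ f)⁻¹ • φ ∘ₗ LinearMap.mulLeft ℂ f

variable {A : Type*} [CommCStarAlgebra A] [PartialOrder A] [StarOrderedRing A]
  {φ ρ : A →ₗ[ℂ] ℂ} {f : A}

theorem isState_conditionedFunctional (hφ : IsState φ) (hρ : IsState ρ) (hf : 0 ≤ f) :
    IsState (conditionedFunctional φ ρ f) := by
  unfold conditionedFunctional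
  split_ifs with h0
  · exact hρ
  · refine ⟨?_, fun a => ?_⟩
    · simp [h0]
    · have hconj : 0 ≤ f * (star a * a) := by
        rw [mul_left_comm, ← mul_assoc]
        exact star_left_conjugate_nonneg hf a
      exact mul_nonneg (inv_nonneg.2 (hφ.toPositiveLinearMap.map_nonneg hf))
        (hφ.toPositiveLinearMap.map_nonneg hconj)

theorem conditionedFunctional_apply_mul (hφ : IsState φ) (ρ : A →ₗ[ℂ] ℂ) (hf : 0 ≤ f) (a : A) :
    conditionedFunctional φ ρ f a * φ f = φ (f * a) := by
  unfold conditionedFunctional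
  split_ifs with h0
  · have hsq : ‖φ (f * a)‖ ^ 2 ≤ ‖φ f‖ * ‖φ (star a * f * a)‖ :=
      norm_map_mul_sq_le hφ.toPositiveLinearMap hf a
    rw [h0, norm_zero, zero_mul] at hsq
    rw [h0, mul_zero, eq_comm, ← norm_eq_zero]
    exact pow_eq_zero_iff two_ne_zero |>.mp (hsq.antisymm (sq_nonneg _))
  · simp [field]

end State

section FiniteRank

/-- The finite-rank map `a ↦ ∑ i, ψ i a • f i`, factored through `ι → 𝕜`. -/
def finiteRankMap {ι 𝕜 V W : Type*} [Fintype ι] [CommSemiring 𝕜] [AddCommMonoid V] [Module 𝕜 V]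
    [AddCommMonoid W] [Module 𝕜 W] (ψ : ι → V →ₗ[𝕜] 𝕜) (f : ι → W) : V →ₗ[𝕜] W :=
  Fintype.linearCombination 𝕜 f ∘ₗ LinearMap.pi ψ

variable {ι : Type*} [Fintype ι]

theorem finiteRankMap_apply {𝕜 V W : Type*} [CommSemiring 𝕜] [AddCommMonoid V] [Module 𝕜 V]
    [AddCommMonoid W] [Module 𝕜 W] (ψ : ι → V →ₗ[𝕜] 𝕜) (f : ι → W) (a : V) :
    finiteRankMap ψ f a = ∑ i, ψ i a • f i := by
  simp only [finiteRankMap, LinearMap.comp_apply, Fintype.linearCombination_apply,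
    LinearMap.pi_apply]

theorem finiteDimensional_range_finiteRankMap {𝕜 V W : Type*} [Field 𝕜] [AddCommGroup V]
    [Module 𝕜 V] [AddCommGroup W] [Module 𝕜 W] (ψ : ι → V →ₗ[𝕜] 𝕜) (f : ι → W) :
    FiniteDimensional 𝕜 (LinearMap.range (finiteRankMap ψ f)) :=
  Submodule.finiteDimensional_of_le (LinearMap.range_comp_le_range _ _)

theorem isCPMap_finiteRankMap {A B : Type*} [NonUnitalSemiring A] [StarRing A] [Module ℂ A]
    [NonUnitalCStarAlgebra B] [PartialOrder B] [StarOrderedRing B] {ψ : ι → A →ₗ[ℂ] ℂ}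
    (hψ : ∀ i, IsCPMap (ψ i)) {f : ι → B} (hf : ∀ i, 0 ≤ f i) :
    IsCPMap (finiteRankMap ψ f) := by
  choose g hg using fun i => CStarAlgebra.nonneg_iff_eq_star_mul_self.mp (hf i)
  have hterm (i : ι) : IsCPMap fun a => ψ i a • f i := by
    rw [hg i]
    exact (isCPMap_smul_star_mul_self ℂ (g i)).comp (hψ i)
  rw [funext (finiteRankMap_apply ψ f)]
  exact IsCPMap.sum hterm

end FiniteRank

section ContinuousMap

variable {X : Type*} [TopologicalSpace X]

theorem exists_partition_dist_lt (𝕜 : Type*) [RCLike 𝕜] [CompactSpace X] {E : Type*}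
    [MetricSpace E] (Φ : C(X, E)) {δ : ℝ} (hδ : 0 < δ) :
    ∃ (t : Finset X) (f : t → C(X, 𝕜)), (∀ i, 0 ≤ f i) ∧ ∑ i, f i = 1 ∧
      ∀ i x, f i x ≠ 0 → dist (Φ x) (Φ i) < δ := by
  obtain ⟨t, ht⟩ := CompactSpace.elim_nhds_subcover (fun x => Φ ⁻¹' Metric.ball (Φ x) δ)
    fun x => Φ.continuous.continuousAt.preimage_mem_nhds (Metric.ball_mem_nhds _ hδ)
  have hcover : Set.range Φ ⊆ ⋃ i : t, Metric.ball (Φ i) δ := by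
    rintro _ ⟨x, rfl⟩
    obtain ⟨y, hy, hxy⟩ := Set.mem_iUnion₂.mp (ht.ge (Set.mem_univ x))
    exact Set.mem_iUnion.mpr ⟨⟨y, hy⟩, hxy⟩
  obtain ⟨p, hp⟩ := PartitionOfUnity.exists_isSubordinate
    (isCompact_range Φ.continuous).isClosed _ (fun _ => Metric.isOpen_ball) hcover
  refine ⟨t, fun i => ((p i).comp Φ).realToRCLike 𝕜, fun i x => ?_, ?_, fun i x hx => ?_⟩
  · simpa using p.nonneg i (Φ x)
  · ext x
    have hsum : ∑ i, p i (Φ x) = 1 := by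
      simpa only [finsum_eq_sum_of_fintype] using p.sum_eq_one (Set.mem_range_self x)
    simpa using mod_cast hsum
  · exact hp i (subset_tsupport _ (by simpa using hx))

theorem isState_eval (x : X) :
    IsState (ContinuousMap.evalAlgHom ℂ ℂ x).toLinearMap where
  unital := rfl
  pos a := star_mul_self_nonneg (a x)

variable [CompactSpace X]

theorem norm_map_mul_le_of_support (φ : C(X, ℂ) →ₚ[ℂ] ℂ) {f b : C(X, ℂ)} {r : ℝ}
    (hf : 0 ≤ f) (hr : 0 ≤ r) (hb : ∀ x, f x ≠ 0 → ‖b x‖ ≤ r) : ‖φ (f * b)‖ ≤ r * ‖φ f‖ := by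
  refine norm_map_mul_le φ hf hr fun x => ?_
  by_cases hx : f x = 0
  · simp [hx]
  · have hsq : ((‖b x‖ ^ 2 : ℝ) : ℂ) ≤ ((r ^ 2 : ℝ) : ℂ) := by
      have := hb x hx
      norm_cast
      gcongr
    calc star (b x) * f x * b x = ((‖b x‖ ^ 2 : ℝ) : ℂ) * f x := by
          rw [mul_right_comm, Complex.star_def, Complex.conj_mul', Complex.ofReal_pow]
      _ ≤ ((r ^ 2 : ℝ) : ℂ) * f x := mul_le_mul_of_nonneg_right hsq (hf x)

theorem norm_conditionedFunctional_sub_le {φ ρ : C(X, ℂ) →ₗ[ℂ] ℂ} (hφ : IsState φ)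
    {f a : C(X, ℂ)} {z : ℂ} {r : ℝ} (hf : 0 ≤ f) (hρ : ‖ρ a - z‖ ≤ r)
    (ha : ∀ x, f x ≠ 0 → ‖a x - z‖ ≤ r) : ‖conditionedFunctional φ ρ f a - z‖ ≤ r := by
  by_cases h0 : φ f = 0
  · simpa only [conditionedFunctional, if_pos h0] using hρ
  · have hbound : ‖φ (f * (a - z • 1))‖ ≤ r * ‖φ f‖ :=
      norm_map_mul_le_of_support hφ.toPositiveLinearMap hf ((norm_nonneg _).trans hρ)
        fun x hx => by simpa using ha x hx
    have hshift : φ (f * (a - z • 1)) = (conditionedFunctional φ ρ f a - z) * φ f := by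
      rw [mul_sub, mul_smul_comm, mul_one, map_sub, map_smul, smul_eq_mul, sub_mul,
        conditionedFunctional_apply_mul hφ ρ hf]
    rw [hshift, norm_mul] at hbound
    exact le_of_mul_le_mul_right hbound (norm_pos_iff.mpr h0)

theorem norm_finiteRankMap_sub_le {ι : Type*} [Fintype ι] {ψ : ι → C(X, ℂ) →ₗ[ℂ] ℂ}
    {f : ι → C(X, ℂ)} {a : C(X, ℂ)} {ε : ℝ} (hε : 0 ≤ ε) (hf : ∀ i, 0 ≤ f i)
    (hf1 : ∑ i, f i = 1) (ha : ∀ i x, f i x ≠ 0 → ‖ψ i a - a x‖ ≤ ε) :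
    ‖finiteRankMap ψ f a - a‖ ≤ ε := by
  refine (ContinuousMap.norm_le _ hε).mpr fun x => ?_
  have hsum : ∑ i, f i x = 1 := by
    simpa only [ContinuousMap.sum_apply, ContinuousMap.one_apply] using DFunLike.congr_fun hf1 x
  have hsum_norm : ∑ i, ‖f i x‖ = 1 := by
    have h : ((∑ i, ‖f i x‖ : ℝ) : ℂ) = 1 := by
      rw [Complex.ofReal_sum, ← hsum]
      exact Finset.sum_congr rfl fun i _ => (Complex.eq_coe_norm_of_nonneg (hf i x)).symm
    exact_mod_cast h
  have hterm (i : ι) : ‖(ψ i a - a x) * f i x‖ ≤ ε * ‖f i x‖ := by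
    rw [norm_mul]
    by_cases hx : f i x = 0
    · simp [hx]
    · gcongr
      exact ha i x hx
  calc ‖(finiteRankMap ψ f a - a) x‖ = ‖∑ i, (ψ i a - a x) * f i x‖ := by
        simp only [finiteRankMap_apply, ContinuousMap.sub_apply, ContinuousMap.sum_apply,
          ContinuousMap.smul_apply, smul_eq_mul, sub_mul, Finset.sum_sub_distrib,
          ← Finset.mul_sum, hsum, mul_one]
    _ ≤ ∑ i, ε * ‖f i x‖ := norm_sum_le_of_le _ fun i _ => hterm i
    _ = ε := by rw [← Finset.mul_sum, hsum_norm, mul_one]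

end ContinuousMap

theorem statement18_general (X : Type*) [TopologicalSpace X] [CompactSpace X]
    (φ : C(X, ℂ) →ₗ[ℂ] ℂ) (hφ : IsState φ) :
    IsCPApproximable φ := by
  intro F ε hε
  obtain ⟨t, f, hf, hf1, hfF⟩ :=
    exists_partition_dist_lt ℂ (ContinuousMap.pi fun a : F => (a : C(X, ℂ))) (half_pos hε)
  have hosc {a} (ha : a ∈ F) {i x} (hx : f i x ≠ 0) : ‖a x - a i‖ < ε / 2 := by
    simpa [dist_eq_norm] using (dist_pi_lt_iff (half_pos hε)).mp (hfF i x hx) ⟨a, ha⟩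
  let ψ (i : t) := conditionedFunctional φ (ContinuousMap.evalAlgHom ℂ ℂ i.1).toLinearMap (f i)
  have hψ (i : t) : IsState (ψ i) := isState_conditionedFunctional hφ (isState_eval _) (hf i)
  have hψF {a} (ha : a ∈ F) (i : t) : ‖ψ i a - a i‖ ≤ ε / 2 :=
    norm_conditionedFunctional_sub_le hφ (hf i) (by simpa using (half_pos hε).le)
      fun x hx => (hosc ha hx).le
  refine ⟨finiteRankMap ψ f, finiteDimensional_range_finiteRankMap ψ f, ?_,
    isCPMap_finiteRankMap (fun i => (hψ i).isCPMap) hf, fun a => ?_,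
    fun a ha => norm_finiteRankMap_sub_le hε.le hf hf1 fun i x hx => ?_⟩
  · simp only [finiteRankMap_apply, (hψ _).unital, one_smul, hf1]
  · simp only [finiteRankMap_apply, map_sum, map_smul, smul_eq_mul, ψ,
      conditionedFunctional_apply_mul hφ _ (hf _)]
    rw [← map_sum, ← Finset.sum_mul, hf1, one_mul]
  · calc ‖ψ i a - a x‖ ≤ ‖ψ i a - a i‖ + ‖a x - a i‖ := by
          simpa only [norm_sub_rev (a i)] using norm_sub_le_norm_sub_add_norm_sub _ (a i) (a x)
      _ ≤ ε := by linarith [hψF ha i, hosc ha hx]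

/-- every state on a commutative C*-algebra `C(X, ℂ)`, `X` compact Hausdorff,
is CP-approximable. -/
theorem statement18 (X : Type*) [TopologicalSpace X] [CompactSpace X] [T2Space X]
    (φ : C(X, ℂ) →ₗ[ℂ] ℂ) (hφ : IsState φ) :
    IsCPApproximable φ :=
  statement18_general X φ hφ
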